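/- Let P be a ground choice program and I an interpretation such that (i) the chosen atoms of I satisfy FD_P and (ii) whenever some chosen_r(w') ∈ I has w' conflicting with w, then diffchoice_r(w) ∈ I. Then for every atom δ ∈ T_{P_C}(I) \ I, the set I ∪ {δ} satisfies FD_P. Consequently Θ_I = T_{P_C}(I) \ I, and Γ_P(I) contains a nonempty element whenever T_{P_C}(I) \ I ≠ ∅. -/

import Mathlib

/-! A chosen rule `chosen_r(w) ← b, ¬ diffchoice_r(w)` fires in `I` only if `diffchoice_r(w) ∉ I`,
so by the closure hypothesis no chosen atom of `I` has a tuple conflicting with `w`. Conflict is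
symmetric and irreflexive, so adding `chosen_r(w)` to `I` creates no conflicting pair. The remaining
claims follow, a singleton `{δ}` being a nonempty element of `Γ_P(I)`. -/

/-- A ground rule: head, positive body, negative body. -/
structure GroundRule (A : Type) where
  head : A
  pos : Finset A
  neg : Finset A

/-- An interpretation `I` satisfies a ground rule. -/
def satisfiesRule {A : Type} (I : Set A) (r : GroundRule A) : Prop :=
  ((↑r.pos : Set A) ⊆ I ∧ ∀ a ∈ r.neg, a ∉ I) → r.head ∈ I

/-- `I` is a model of the ground program `P`. -/
def isModel {A : Type} (P : Set (GroundRule A)) (I : Set A) : Prop :=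
  ∀ r ∈ P, satisfiesRule I r

/-- The immediate consequence operator `T_P`. -/
def TP {A : Type} (P : Set (GroundRule A)) (I : Set A) : Set A :=
  { a | ∃ r ∈ P, r.head = a ∧ (↑r.pos : Set A) ⊆ I ∧ ∀ b ∈ r.neg, b ∉ I }

/-- The reduct of `P` with respect to `M`. -/
def reduct {A : Type} (P : Set (GroundRule A)) (M : Set A) : Set (GroundRule A) :=
  { r' | ∃ r ∈ P, (∀ b ∈ r.neg, b ∉ M) ∧ r' = ⟨r.head, r.pos, ∅⟩ }

/-- `M` is the least model of `P`. -/
def isLeastModel {A : Type} (P : Set (GroundRule A)) (M : Set A) : Prop :=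
  isModel P M ∧ ∀ M', isModel P M' → M ⊆ M'

/-- `M` is a stable model of `P`: it is the least model of the reduct of `P` w.r.t. `M`. -/
def isStableModel {A : Type} (P : Set (GroundRule A)) (M : Set A) : Prop :=
  isLeastModel (reduct P M) M

/-- Inflationary iteration `F^n(J)` where `F(I) = I ∪ T(I)`. -/
def iterT {A : Type} (T : Set A → Set A) (J : Set A) : ℕ → Set A
  | 0 => J
  | n + 1 => iterT T J n ∪ T (iterT T J n)

/-- `T^{↑ω}(J) = ⋃ₙ Fⁿ(J)` where `F(I) = I ∪ T(I)`. -/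
def Tomega {A : Type} (T : Set A → Set A) (J : Set A) : Set A :=
  ⋃ n, iterT T J n

/-- Atoms of a ground choice program: ordinary atoms, `chosen_r(w)` atoms and
`diffchoice_r(w)` atoms. -/
inductive ChoiceAtom (O V R : Type) (ar : R → ℕ) : Type where
  | ord : O → ChoiceAtom O V R ar
  | chosen : (r : R) → (Fin (ar r) → V) → ChoiceAtom O V R ar
  | diffchoice : (r : R) → (Fin (ar r) → V) → ChoiceAtom O V R ar

/-- A ground choice program. -/
structure ChoiceProgram (O V R : Type) (ar : R → ℕ) : Type where
  /-- For each index `r`, a finite set of functional dependencies `(X, Y)`,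
  pairs of disjoint subsets of `Fin (ar r)`. -/
  FD : (r : R) → Finset (Finset (Fin (ar r)) × Finset (Fin (ar r)))
  FD_disj : ∀ r, ∀ p ∈ FD r, Disjoint p.1 p.2
  /-- The standard rules: ordinary heads, positive bodies of ordinary and chosen atoms. -/
  PD' : Set (GroundRule (ChoiceAtom O V R ar))
  PD'_head : ∀ ru ∈ PD', ∃ o, ru.head = ChoiceAtom.ord o
  PD'_neg : ∀ ru ∈ PD', ru.neg = ∅
  PD'_pos : ∀ ru ∈ PD', ∀ a ∈ ru.pos, ∀ r w, a ≠ ChoiceAtom.diffchoice r w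
  /-- For each index `r`, the instances `(w, b)` of its choice rule: tuple and body. -/
  B : (r : R) → Set ((Fin (ar r) → V) × Finset (ChoiceAtom O V R ar))
  B_pos : ∀ r, ∀ p ∈ B r, ∀ a ∈ p.2, ∀ r' w, a ≠ ChoiceAtom.diffchoice r' w

variable {O V R : Type} {ar : R → ℕ}

/-- Tuples `w, w'` of index `r` conflict: for some FD `(X, Y)` they agree
on every coordinate of `X` and differ on some coordinate of `Y`. -/
def conflicts (P : ChoiceProgram O V R ar) (r : R) (w w' : Fin (ar r) → V) : Prop :=
  ∃ p ∈ P.FD r, (∀ i ∈ p.1, w i = w' i) ∧ ∃ i ∈ p.2, w i ≠ w' i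

/-- The chosen rules of `foe(P)`. -/
def chosenRules (P : ChoiceProgram O V R ar) : Set (GroundRule (ChoiceAtom O V R ar)) :=
  { ru | ∃ r, ∃ p ∈ P.B r,
      ru = ⟨ChoiceAtom.chosen r p.1, p.2, {ChoiceAtom.diffchoice r p.1}⟩ }

/-- The diffchoice rules of `foe(P)`. -/
def diffRules (P : ChoiceProgram O V R ar) : Set (GroundRule (ChoiceAtom O V R ar)) :=
  { ru | ∃ r w w', conflicts P r w w' ∧
      ru = ⟨ChoiceAtom.diffchoice r w, {ChoiceAtom.chosen r w'}, ∅⟩ }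

/-- The first-order equivalent `foe(P)` of a choice program. -/
def foe (P : ChoiceProgram O V R ar) : Set (GroundRule (ChoiceAtom O V R ar)) :=
  P.PD' ∪ chosenRules P ∪ diffRules P

/-- `S` satisfies `FD_P`: no two chosen atoms of `S` have conflicting tuples. -/
def satFD (P : ChoiceProgram O V R ar) (S : Set (ChoiceAtom O V R ar)) : Prop :=
  ∀ r w w', ChoiceAtom.chosen r w ∈ S → ChoiceAtom.chosen r w' ∈ S →
    ¬ conflicts P r w w'

/-- `T_{P_C}`: immediate consequence operator of the chosen rules. -/
def TPC (P : ChoiceProgram O V R ar) : Set (ChoiceAtom O V R ar) → Set (ChoiceAtom O V R ar) :=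
  TP (chosenRules P)

/-- `T_{P_D}`: immediate consequence operator of all other rules of `foe(P)`. -/
def TPD (P : ChoiceProgram O V R ar) : Set (ChoiceAtom O V R ar) → Set (ChoiceAtom O V R ar) :=
  TP (P.PD' ∪ diffRules P)

/-- `Γ_P(I)`: `{∅}` if `T_{P_C}(I) \ I = ∅`, otherwise all nonempty
`ΔC ⊆ T_{P_C}(I) \ I` such that `I ∪ ΔC` satisfies `FD_P`. -/
def GammaP (P : ChoiceProgram O V R ar) (I : Set (ChoiceAtom O V R ar)) :
    Set (Set (ChoiceAtom O V R ar)) :=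
  { DC | (TPC P I \ I = ∅ ∧ DC = ∅) ∨
         ((TPC P I \ I).Nonempty ∧ DC.Nonempty ∧ DC ⊆ TPC P I \ I ∧ satFD P (I ∪ DC)) }

/-- The nondeterministic immediate consequence operator `Ψ_P`. -/
def PsiP (P : ChoiceProgram O V R ar) (I : Set (ChoiceAtom O V R ar)) :
    Set (Set (ChoiceAtom O V R ar)) :=
  { J | ∃ DC ∈ GammaP P I, J = Tomega (TPD P) (I ∪ DC) ∪ DC }

/-- An inflationary choice fixpoint computation for `P`. -/
def isChoiceComputation (P : ChoiceProgram O V R ar)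
    (Iseq : ℕ → Set (ChoiceAtom O V R ar)) : Prop :=
  Iseq 0 = ∅ ∧ ∀ n, Iseq (n + 1) ∈ PsiP P (Iseq n)

/-- `Θ_I`: candidate new chosen atoms `δ ∈ T_{P_C}(I) \ I` with `I ∪ {δ}` satisfying `FD_P`. -/
def ThetaI (P : ChoiceProgram O V R ar) (I : Set (ChoiceAtom O V R ar)) :
    Set (ChoiceAtom O V R ar) :=
  { d | d ∈ TPC P I \ I ∧ satFD P (I ∪ {d}) }

theorem conflicts_symm {O V R : Type} {ar : R → ℕ} {P : ChoiceProgram O V R ar} {r : R}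
    {w w' : Fin (ar r) → V} (h : conflicts P r w w') : conflicts P r w' w := by
  obtain ⟨p, hp, hX, i, hi, hne⟩ := h
  exact ⟨p, hp, fun j hj => (hX j hj).symm, i, hi, hne.symm⟩

theorem not_conflicts_self {O V R : Type} {ar : R → ℕ} (P : ChoiceProgram O V R ar) (r : R)
    (w : Fin (ar r) → V) : ¬ conflicts P r w w := by
  rintro ⟨p, hp, hX, i, hi, hne⟩
  exact hne rfl

/-- if the chosen atoms of `I` satisfy `FD_P` and `I` contains
`diffchoice_r(w)` whenever some conflicting `chosen_r(w')` is in `I`, then for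
every `δ ∈ T_{P_C}(I) \ I` the set `I ∪ {δ}` satisfies `FD_P`; consequently
`Θ_I = T_{P_C}(I) \ I` and `Γ_P(I)` contains a nonempty element whenever
`T_{P_C}(I) \ I ≠ ∅`. -/
theorem theta_eq_TPC_diff {O V R : Type} {ar : R → ℕ}
    (P : ChoiceProgram O V R ar) (I : Set (ChoiceAtom O V R ar))
    (h1 : satFD P I)
    (h2 : ∀ (r : R) (w w' : Fin (ar r) → V), conflicts P r w w' →
      ChoiceAtom.chosen r w' ∈ I → ChoiceAtom.diffchoice r w ∈ I) :
    (∀ d ∈ TPC P I \ I, satFD P (I ∪ {d})) ∧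
    ThetaI P I = TPC P I \ I ∧
    ((TPC P I \ I).Nonempty → ∃ DC ∈ GammaP P I, DC.Nonempty) := by
  have key : ∀ d ∈ TPC P I \ I, satFD P (I ∪ {d}) := by
    rintro d ⟨⟨ru, ⟨r, p, hp, rfl⟩, rfl, hpos, hneg⟩, hdI⟩
    have hdiff : ChoiceAtom.diffchoice r p.1 ∉ I := hneg _ (Finset.mem_singleton_self _)
    rintro s w w' (hw | hw) (hw' | hw') hc
    · exact h1 s w w' hw hw' hc
    · obtain ⟨rfl, h⟩ := ChoiceAtom.chosen.inj hw'
      obtain rfl := eq_of_heq h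
      exact hdiff (h2 _ _ _ (conflicts_symm hc) hw)
    · obtain ⟨rfl, h⟩ := ChoiceAtom.chosen.inj hw
      obtain rfl := eq_of_heq h
      exact hdiff (h2 _ _ _ hc hw')
    · obtain ⟨rfl, h⟩ := ChoiceAtom.chosen.inj hw
      obtain ⟨-, h'⟩ := ChoiceAtom.chosen.inj hw'
      obtain rfl := eq_of_heq h
      obtain rfl := eq_of_heq h'
      exact not_conflicts_self P _ _ hc
  refine ⟨key, Set.ext fun d => ⟨fun h => h.1, fun h => ⟨h, key d h⟩⟩, ?_⟩
  rintro ⟨d, hd⟩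
  exact ⟨{d}, Or.inr ⟨⟨d, hd⟩, Set.singleton_nonempty d, Set.singleton_subset_iff.2 hd, key d hd⟩,
    Set.singleton_nonempty d⟩
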